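/- For every real ε, every positive integer N (h = 1/N), every vector (ψ₀,…,ψ_{N−1}) ∈ ℂ^N with associated step function ψ_h = Σ_{j=0}^{N−1} ψ_j χ_{j+ε}, and every 1-periodic function u ∈ C¹(ℝ, ℂ), one has | h Σ_{j=0}^{N−1} ψ_j u(t_{j+ε}) | ≤ ‖ψ_h‖₀ ( ‖u‖₀ + π h ‖u‖₁ ). -/

import Mathlib

noncomputable section

/-- Smooth kernel data, 1-periodic in each variable. -/
def SPK (A : ℝ → ℝ → ℂ) : Prop :=
  ContDiff ℝ (⊤ : ℕ∞) (fun p : ℝ × ℝ => A p.1 p.2) ∧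
    (∀ s t, A (s + 1) t = A s t) ∧ (∀ s t, A s (t + 1) = A s t)

/-- Logarithmic kernel `V(s,t) = (i/(2π)) A(s,t) log(sin²(π(s−t))) + K(s,t)`. -/
def logKer (A K : ℝ → ℝ → ℂ) (s t : ℝ) : ℂ :=
  Complex.I / (2 * Real.pi) * A s t * (Real.log (Real.sin (Real.pi * (s - t)) ^ 2) : ℂ) + K s t

/-- Grid point `s_{j+ε} = (j − 1/2 + ε)h`. -/
def sg (h ε : ℝ) (j : ℤ) : ℝ := ((j : ℝ) - 1 / 2 + ε) * h

/-- Grid point `t_{j+ε} = (j + ε)h`. -/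
def tg (h ε : ℝ) (j : ℤ) : ℝ := ((j : ℝ) + ε) * h

/-- Integral operator with kernel `V`. -/
def Vop (V : ℝ → ℝ → ℂ) (φ : ℝ → ℂ) (s : ℝ) : ℂ := ∫ t in (0:ℝ)..1, V s t * φ t

/-- Hypersingular operator `W = −D V₁ D + V₂`. -/
def Wop (V1 V2 : ℝ → ℝ → ℂ) (φ : ℝ → ℂ) (s : ℝ) : ℂ :=
  -deriv (Vop V1 (deriv φ)) s + Vop V2 φ s

/-- Nyström matrix entries `W^ε_{ij}`. -/
def Wmat (V1 V2 : ℝ → ℝ → ℂ) (h ε : ℝ) (i j : ℤ) : ℂ :=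
  V1 (sg h ε (i + 1)) (sg h 0 (j + 1)) - V1 (sg h ε i) (sg h 0 (j + 1))
    - V1 (sg h ε (i + 1)) (sg h 0 j) + V1 (sg h ε i) (sg h 0 j)
    + (h : ℂ) ^ 2 * V2 (tg h ε i) (tg h 0 j)

/-- Fourier coefficient of a 1-periodic function. -/
def fc (u : ℝ → ℂ) (m : ℤ) : ℂ :=
  ∫ t in (0:ℝ)..1, u t * Complex.exp (-(2 * Real.pi * Complex.I * (m : ℂ) * (t : ℂ)))

/-- Periodic Sobolev norm of order `r`. -/
def sobNorm (r : ℝ) (u : ℝ → ℂ) : ℝ :=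
  Real.sqrt (‖fc u 0‖ ^ 2 +
    ∑' m : ℤ, if m = 0 then 0 else |(m : ℝ)| ^ (2 * r) * ‖fc u m‖ ^ 2)

/-- 1-periodic step function on the ε-shifted grid with coefficients `v`. -/
def stepf (N : ℕ) (ε : ℝ) (v : ZMod N → ℂ) (s : ℝ) : ℂ :=
  v ((⌊s * N + 1 / 2 - ε⌋ : ℤ) : ZMod N)

/-- Midpoint quadrature error matrix entries `E^ε_{ij}`. -/
def Emat (V2 : ℝ → ℝ → ℂ) (h ε : ℝ) (i j : ℤ) : ℂ :=
  (∫ s in (sg h ε i)..(sg h ε (i + 1)), ∫ t in (sg h 0 j)..(sg h 0 (j + 1)), V2 s t)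
    - (h : ℂ) ^ 2 * V2 (tg h ε i) (tg h 0 j)

/-- Spectral (ℓ²-operator) norm of a complex `N×N` matrix. -/
def specNorm {N : ℕ} (M : Matrix (Fin N) (Fin N) ℂ) : ℝ :=
  ‖LinearMap.toContinuousLinearMap (Matrix.toEuclideanLin M)‖

/-- The function `C̄₁(t) = −(1/(2πi)) log(4 sin²(πt))`. -/
def Cbar1 (t : ℝ) : ℂ :=
  -(1 / (2 * Real.pi * Complex.I)) * (Real.log (4 * Real.sin (Real.pi * t) ^ 2) : ℂ)

end

/-!
Put `g = |u|²`, so that `|g'| ≤ 2 |u| |u'|`. The points `t_{j+ε}` are the midpoints of `N` cells of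
length `h` tiling one period, and the midpoint rule for `g` has error at most `(h/2) ∫ |g'|`. Hence,
by Cauchy–Schwarz in `L²(0,1)`,
`h ∑ⱼ |u(t_{j+ε})|² ≤ ‖u‖² + h ‖u‖ ‖u'‖ ≤ (‖u‖ + (h/2) ‖u'‖)²`.
Parseval's identity turns `‖u‖` into `‖u‖₀` and, since `u'` has Fourier coefficients `2πim û(m)`,
bounds `‖u'‖` by `2π ‖u‖₁`. The claim follows by Cauchy–Schwarz for the sum against `ψ`.
-/

open MeasureTheory Set intervalIntegral
open scoped Real

section MidpointRule

variable {E : Type*} [NormedAddCommGroup E] [NormedSpace ℝ E] [CompleteSpace E] {g g' : ℝ → E}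

lemma norm_smul_sub_integral_le {a b : ℝ} (hg : ∀ x ∈ uIcc a b, HasDerivAt g (g' x) x)
    (hg' : IntervalIntegrable g' volume a b) :
    ‖(b - a) • g a - ∫ x in a..b, g x‖ ≤ |b - a| * |∫ x in a..b, ‖g' x‖| := by
  have by_parts : ∫ x in a..b, (x - b) • g' x = (b - a) • g a - ∫ x in a..b, g x := by
    rw [integral_smul_deriv_eq_deriv_smul (u' := fun _ => 1)
      (fun x _ => (hasDerivAt_id' x).sub_const b) hg intervalIntegrable_const hg']
    simp [← neg_smul]
  have weight_le : ∀ᵐ x ∂volume.restrict (uIoc a b), ‖(x - b) • g' x‖ ≤ |b - a| * ‖g' x‖ := by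
    refine (ae_restrict_mem measurableSet_uIoc).mono fun x hx => ?_
    rw [norm_smul, Real.norm_eq_abs, abs_sub_comm x b]
    exact mul_le_mul_of_nonneg_right (abs_sub_right_of_mem_uIcc (uIoc_subset_uIcc hx))
      (norm_nonneg _)
  calc ‖(b - a) • g a - ∫ x in a..b, g x‖
      = ‖∫ x in a..b, (x - b) • g' x‖ := by rw [by_parts]
    _ ≤ |∫ x in a..b, |b - a| * ‖g' x‖| :=
        norm_integral_le_abs_of_norm_le weight_le (hg'.norm.const_mul _)
    _ = |b - a| * |∫ x in a..b, ‖g' x‖| := by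
        rw [intervalIntegral.integral_const_mul, abs_mul, abs_abs]

lemma norm_midpoint_sub_integral_le {a h : ℝ} (hh : 0 ≤ h)
    (hg : ∀ x ∈ Icc a (a + h), HasDerivAt g (g' x) x)
    (hg' : IntervalIntegrable g' volume a (a + h)) :
    ‖h • g (a + h / 2) - ∫ x in a..(a + h), g x‖ ≤ h / 2 * ∫ x in a..(a + h), ‖g' x‖ := by
  set c := a + h / 2 with hc
  have cell : uIcc a (a + h) = Icc a (a + h) := uIcc_of_le (by linarith)
  have left_subset : uIcc a c ⊆ Icc a (a + h) := by
    rw [uIcc_of_le (by linarith)]; exact Icc_subset_Icc_right (by linarith)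
  have right_subset : uIcc c (a + h) ⊆ Icc a (a + h) := by
    rw [uIcc_of_le (by linarith)]; exact Icc_subset_Icc_left (by linarith)
  have g_cont : ContinuousOn g (Icc a (a + h)) := fun x hx =>
    (hg x hx).continuousAt.continuousWithinAt
  have g'_left : IntervalIntegrable g' volume a c := hg'.mono_set (left_subset.trans cell.ge)
  have g'_right : IntervalIntegrable g' volume c (a + h) :=
    hg'.mono_set (right_subset.trans cell.ge)
  have left : ‖(h / 2) • g c - ∫ x in a..c, g x‖ ≤ h / 2 * ∫ x in a..c, ‖g' x‖ := by
    have := norm_smul_sub_integral_le (uIcc_comm a c ▸ fun x hx => hg x (left_subset hx))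
      g'_left.symm
    rwa [integral_symm a c, integral_symm a c, abs_neg, show a - c = -(h / 2) by rw [hc]; ring,
      neg_smul, neg_sub_neg, norm_sub_rev, abs_neg, abs_of_nonneg (by linarith),
      abs_of_nonneg (integral_nonneg (by linarith) fun x _ => norm_nonneg (g' x))] at this
  have right : ‖(h / 2) • g c - ∫ x in c..(a + h), g x‖ ≤ h / 2 * ∫ x in c..(a + h), ‖g' x‖ := by
    have := norm_smul_sub_integral_le (fun x hx => hg x (right_subset hx)) g'_right
    rwa [show a + h - c = h / 2 by rw [hc]; ring, abs_of_nonneg (by linarith),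
      abs_of_nonneg (integral_nonneg (by linarith) fun x _ => norm_nonneg (g' x))] at this
  have halves : h • g c = (h / 2) • g c + (h / 2) • g c := by rw [← add_smul, add_halves]
  rw [halves, ← integral_add_adjacent_intervals (g_cont.mono left_subset).intervalIntegrable
      (g_cont.mono right_subset).intervalIntegrable,
    ← integral_add_adjacent_intervals g'_left.norm g'_right.norm, mul_add, add_sub_add_comm]
  exact norm_add_le_of_le left right

lemma norm_sum_midpoint_sub_integral_le {a h : ℝ} {n : ℕ} (hh : 0 ≤ h)
    (hg : ∀ x ∈ Icc a (a + n * h), HasDerivAt g (g' x) x)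
    (hg' : IntervalIntegrable g' volume a (a + n * h)) :
    ‖h • ∑ j ∈ Finset.range n, g (a + (j + 1 / 2) * h) - ∫ x in a..(a + n * h), g x‖ ≤
      h / 2 * ∫ x in a..(a + n * h), ‖g' x‖ := by
  induction n with
  | zero => simp
  | succ n ih =>
    set b := a + n * h with hb
    have hab : a ≤ b := by rw [hb]; linarith [mul_nonneg n.cast_nonneg hh]
    have hbh : a + (n + 1 : ℕ) * h = b + h := by rw [hb]; push_cast; ring
    rw [hbh] at hg hg' ⊢
    have whole : uIcc a (b + h) = Icc a (b + h) := uIcc_of_le (by linarith)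
    have hg'_init : IntervalIntegrable g' volume a b := hg'.mono_set <| by
      rw [whole, uIcc_of_le hab]; exact Icc_subset_Icc_right (by linarith)
    have hg'_last : IntervalIntegrable g' volume b (b + h) := hg'.mono_set <| by
      rw [whole, uIcc_of_le (by linarith)]; exact Icc_subset_Icc_left hab
    have hg_init : ∀ x ∈ Icc a b, HasDerivAt g (g' x) x := fun x hx =>
      hg x ⟨hx.1, by linarith [hx.2]⟩
    have hg_last : ∀ x ∈ Icc b (b + h), HasDerivAt g (g' x) x := fun x hx =>
      hg x ⟨hab.trans hx.1, hx.2⟩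
    have hg_int {c d : ℝ} (hcd : c ≤ d) (hg : ∀ x ∈ Icc c d, HasDerivAt g (g' x) x) :
        IntervalIntegrable g volume c d := ContinuousOn.intervalIntegrable <| by
      rw [uIcc_of_le hcd]; exact fun x hx => (hg x hx).continuousAt.continuousWithinAt
    have last := norm_midpoint_sub_integral_le hh hg_last hg'_last
    rw [Finset.sum_range_succ, smul_add, show a + (n + 1 / 2) * h = b + h / 2 by rw [hb]; ring,
      ← integral_add_adjacent_intervals (hg_int hab hg_init) (hg_int (by linarith) hg_last),
      ← integral_add_adjacent_intervals hg'_init.norm hg'_last.norm, mul_add, add_sub_add_comm]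
    exact norm_add_le_of_le (ih hg_init hg'_init) last

end MidpointRule

section SquareIntegrable

lemma memLp_restrict_Ioc_of_continuousOn {E : Type*} [NormedAddCommGroup E] {f : ℝ → E} {a b : ℝ}
    (hf : ContinuousOn f (Icc a b)) (p : ENNReal) : MemLp f p (volume.restrict (Ioc a b)) := by
  obtain ⟨C, hC⟩ := isCompact_Icc.exists_bound_of_continuousOn hf
  exact .of_bound ((hf.mono Ioc_subset_Icc_self).aestronglyMeasurable measurableSet_Ioc) C
    ((ae_restrict_mem measurableSet_Ioc).mono fun x hx => hC x (Ioc_subset_Icc_self hx))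

lemma integral_norm_mul_norm_le_sqrt_mul_sqrt {α E : Type*} [MeasurableSpace α] {μ : Measure α}
    [NormedAddCommGroup E] {f g : α → E} (hf : MemLp f 2 μ) (hg : MemLp g 2 μ) :
    ∫ x, ‖f x‖ * ‖g x‖ ∂μ ≤ √(∫ x, ‖f x‖ ^ 2 ∂μ) * √(∫ x, ‖g x‖ ^ 2 ∂μ) := by
  have two : ENNReal.ofReal 2 = 2 := by simp
  simpa [Real.sqrt_eq_rpow] using
    integral_mul_norm_le_Lp_mul_Lq Real.HolderConjugate.two_two (two ▸ hf) (two ▸ hg)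

variable {E : Type*} [NormedAddCommGroup E] [InnerProductSpace ℝ E] {u u' : ℝ → E}

lemma sum_midpoint_sq_norm_le {a h : ℝ} {n : ℕ} (hh : 0 ≤ h)
    (hu : ∀ x ∈ Icc a (a + n * h), HasDerivAt u (u' x) x)
    (hu' : MemLp u' 2 (volume.restrict (Ioc a (a + n * h)))) :
    h * ∑ j ∈ Finset.range n, ‖u (a + (j + 1 / 2) * h)‖ ^ 2 ≤
      (√(∫ x in a..(a + n * h), ‖u x‖ ^ 2) + h / 2 * √(∫ x in a..(a + n * h), ‖u' x‖ ^ 2)) ^ 2 := by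
  have hab : a ≤ a + n * h := le_add_of_nonneg_right (by positivity)
  set b := a + n * h
  set A := √(∫ x in a..b, ‖u x‖ ^ 2) with hA
  set B := √(∫ x in a..b, ‖u' x‖ ^ 2) with hB
  have hu2 : MemLp u 2 (volume.restrict (Ioc a b)) := memLp_restrict_Ioc_of_continuousOn
    (fun x hx => (hu x hx).continuousAt.continuousWithinAt) 2
  have abs_inner_le (x : ℝ) : |2 * inner ℝ (u x) (u' x)| ≤ 2 * (‖u x‖ * ‖u' x‖) := by
    rw [abs_mul, abs_two]
    gcongr
    exact abs_real_inner_le_norm _ _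
  have norm_mul_int : IntervalIntegrable (fun x => 2 * (‖u x‖ * ‖u' x‖)) volume a b :=
    (intervalIntegrable_iff_integrableOn_Ioc_of_le hab).2
      ((hu2.norm.integrable_mul hu'.norm).const_mul 2)
  have deriv_int : IntervalIntegrable (fun x => 2 * inner ℝ (u x) (u' x)) volume a b :=
    norm_mul_int.mono_fun' (by
      rw [uIoc_of_le hab]; exact (hu2.1.inner hu'.1).const_mul 2) (.of_forall abs_inner_le)
  have midpoint := norm_sum_midpoint_sub_integral_le hh (fun x hx => (hu x hx).norm_sq) deriv_int
  have deriv_le : ∫ x in a..b, |2 * inner ℝ (u x) (u' x)| ≤ 2 * (A * B) := by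
    refine (integral_mono_on hab deriv_int.abs norm_mul_int fun x _ => abs_inner_le x).trans ?_
    rw [intervalIntegral.integral_const_mul]
    gcongr
    simpa only [hA, hB, integral_of_le hab] using integral_norm_mul_norm_le_sqrt_mul_sqrt hu2 hu'
  have sq_A : A ^ 2 = ∫ x in a..b, ‖u x‖ ^ 2 :=
    Real.sq_sqrt (integral_nonneg hab fun x _ => sq_nonneg ‖u x‖)
  calc h * ∑ j ∈ Finset.range n, ‖u (a + (j + 1 / 2) * h)‖ ^ 2
      ≤ A ^ 2 + h / 2 * ∫ x in a..b, |2 * inner ℝ (u x) (u' x)| := by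
        rw [sq_A, ← sub_le_iff_le_add']
        exact (le_abs_self _).trans midpoint
    _ ≤ A ^ 2 + h / 2 * (2 * (A * B)) := by gcongr
    _ ≤ (A + h / 2 * B) ^ 2 := by linarith [sq_nonneg (h / 2 * B)]

end SquareIntegrable

section Fourier

variable {u u' : ℝ → ℂ}

lemma fc_eq_fourierCoeffOn (u : ℝ → ℂ) (m : ℤ) : fc u m = fourierCoeffOn zero_lt_one u m := by
  rw [fourierCoeffOn_eq_integral, fc]
  simp only [sub_zero, div_one, one_smul, smul_eq_mul, fourier_coe_apply]
  refine integral_congr fun x _ => ?_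
  rw [mul_comm]
  congr 2
  push_cast
  ring

lemma hasSum_sq_norm_fc (hu : MemLp u 2 (volume.restrict (Ioc 0 1))) :
    HasSum (fun m => ‖fc u m‖ ^ 2) (∫ x in (0 : ℝ)..1, ‖u x‖ ^ 2) := by
  simpa [fc_eq_fourierCoeffOn] using hasSum_sq_fourierCoeffOn zero_lt_one hu

lemma sobNorm_zero_eq_sqrt_integral (hu : MemLp u 2 (volume.restrict (Ioc 0 1))) :
    sobNorm 0 u = √(∫ x in (0 : ℝ)..1, ‖u x‖ ^ 2) := by
  have parseval := hasSum_sq_norm_fc hu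
  rw [← parseval.tsum_eq, parseval.summable.tsum_eq_add_tsum_ite 0, sobNorm]
  simp

lemma fc_of_hasDerivAt (hu : ∀ x ∈ uIcc 0 1, HasDerivAt u (u' x) x)
    (hu' : IntervalIntegrable u' volume 0 1) (h01 : u 0 = u 1) (m : ℤ) :
    fc u' m = 2 * π * Complex.I * m * fc u m := by
  rcases eq_or_ne m 0 with rfl | hm
  · simp [fc, integral_eq_sub_of_hasDerivAt hu hu', h01]
  · have hm' : (m : ℂ) ≠ 0 := mod_cast hm
    rw [fc_eq_fourierCoeffOn, fc_eq_fourierCoeffOn, fourierCoeffOn_of_hasDerivAt _ hm hu hu', h01]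
    simp only [sub_self, mul_zero, zero_sub, Complex.ofReal_one, Complex.ofReal_zero, sub_zero]
    field_simp [Complex.I_ne_zero, Real.pi_ne_zero]

lemma sobNorm_deriv_le (hu : ∀ x ∈ uIcc 0 1, HasDerivAt u (u' x) x)
    (hu' : IntervalIntegrable u' volume 0 1) (h01 : u 0 = u 1) (r : ℝ) :
    sobNorm r u' ≤ 2 * π * sobNorm (r + 1) u := by
  have term_eq (m : ℤ) : (if m = 0 then 0 else |(m : ℝ)| ^ (2 * r) * ‖fc u' m‖ ^ 2) =
      (2 * π) ^ 2 * if m = 0 then 0 else |(m : ℝ)| ^ (2 * (r + 1)) * ‖fc u m‖ ^ 2 := by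
    split_ifs with hm
    · rw [mul_zero]
    · have hm' : 0 < |(m : ℝ)| := abs_pos.2 (mod_cast hm)
      rw [fc_of_hasDerivAt hu hu' h01, mul_add, Real.rpow_add hm', mul_one, Real.rpow_two]
      simp only [norm_mul, Complex.norm_I, Complex.norm_real, Complex.norm_intCast,
        Complex.norm_ofNat, Real.norm_eq_abs, abs_of_pos Real.pi_pos]
      ring
  have fc_zero : fc u' 0 = 0 := by simp [fc_of_hasDerivAt hu hu' h01]
  rw [sobNorm, sobNorm, ← Real.sqrt_sq Real.two_pi_pos.le, ← Real.sqrt_mul (sq_nonneg _),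
    tsum_congr term_eq, tsum_mul_left, fc_zero, norm_zero, zero_pow two_ne_zero, zero_add]
  gcongr
  exact le_add_of_nonneg_left (sq_nonneg _)

end Fourier

section Sampling

lemma periodic_deriv {𝕜 F : Type*} [NontriviallyNormedField 𝕜] [NormedAddCommGroup F]
    [NormedSpace 𝕜 F] {f : 𝕜 → F} {c : 𝕜} (hf : Function.Periodic f c) :
    Function.Periodic (deriv f) c := fun x => by
  rw [← deriv_comp_add_const, funext hf]

lemma memLp_two_deriv_of_periodic {E : Type*} [NormedAddCommGroup E] [NormedSpace ℝ E]
    [CompleteSpace E] {u : ℝ → E} {T : ℝ} (hT : 0 < T) (hper : Function.Periodic u T)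
    (hu' : MemLp (deriv u) 2 (volume.restrict (Ioc 0 T))) (a : ℝ) :
    MemLp (deriv u) 2 (volume.restrict (Ioc a (a + T))) := by
  rw [memLp_two_iff_integrable_sq_norm (aestronglyMeasurable_deriv _ _)] at hu' ⊢
  have hper' : Function.Periodic (fun x => ‖deriv u x‖ ^ 2) T :=
    (periodic_deriv hper).comp fun z => ‖z‖ ^ 2
  rw [← IntegrableOn, ← intervalIntegrable_iff_integrableOn_Ioc_of_le (by linarith)] at hu' ⊢
  exact hper'.intervalIntegrable₀ hT.ne' hu' _ _

lemma sum_zmod_val {M : Type*} [AddCommMonoid M] {N : ℕ} [NeZero N] (f : ℕ → M) :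
    ∑ j : ZMod N, f j.val = ∑ j ∈ Finset.range N, f j := by
  obtain ⟨n, rfl⟩ := Nat.exists_eq_succ_of_ne_zero (NeZero.ne N)
  exact Fin.sum_univ_eq_sum_range f (n + 1)

lemma norm_const_mul_sum_mul_le {ι R : Type*} [NonUnitalSeminormedRing R] (s : Finset ι) (c : R)
    (f g : ι → R) :
    ‖c * ∑ i ∈ s, f i * g i‖ ≤ √(‖c‖ * ∑ i ∈ s, ‖f i‖ ^ 2) * √(‖c‖ * ∑ i ∈ s, ‖g i‖ ^ 2) :=
  calc ‖c * ∑ i ∈ s, f i * g i‖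
      ≤ ‖c‖ * ∑ i ∈ s, ‖f i‖ * ‖g i‖ :=
        (norm_mul_le _ _).trans <| by
          gcongr
          exact norm_sum_le_of_le s fun i _ => norm_mul_le _ _
    _ ≤ ‖c‖ * (√(∑ i ∈ s, ‖f i‖ ^ 2) * √(∑ i ∈ s, ‖g i‖ ^ 2)) := by
        gcongr
        exact Real.sum_mul_le_sqrt_mul_sqrt s _ _
    _ = √(‖c‖ * ∑ i ∈ s, ‖f i‖ ^ 2) * √(‖c‖ * ∑ i ∈ s, ‖g i‖ ^ 2) := by
        rw [Real.sqrt_mul (norm_nonneg c), Real.sqrt_mul (norm_nonneg c), mul_mul_mul_comm,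
          Real.mul_self_sqrt (norm_nonneg c)]

lemma sqrt_sum_sq_norm_tg_le {u : ℝ → ℂ} (hu : Differentiable ℝ u)
    (hper : Function.Periodic u 1) (hu' : MemLp (deriv u) 2 (volume.restrict (Ioc 0 1))) (ε : ℝ)
    (N : ℕ) [NeZero N] :
    √((1 / (N : ℝ)) * ∑ j ∈ Finset.range N, ‖u (tg (1 / (N : ℝ)) ε j)‖ ^ 2) ≤
      sobNorm 0 u + π * (1 / (N : ℝ)) * sobNorm 1 u := by
  have hN : (N : ℝ) * (1 / N) = 1 := mul_one_div_cancel (NeZero.ne _)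
  set h : ℝ := 1 / N
  have hh : 0 ≤ h := by positivity
  set a := sg h ε 0 with ha
  have tg_eq (j : ℕ) : tg h ε j = a + (j + 1 / 2) * h := by
    simp only [ha, tg, sg]; push_cast; ring
  have period (f : ℂ → ℝ) {v : ℝ → ℂ} (hv : Function.Periodic v 1) :
      ∫ x in a..(a + 1), f (v x) = ∫ x in (0 : ℝ)..1, f (v x) := by
    simpa using (hv.comp f).intervalIntegral_add_eq a 0
  have sampling := sum_midpoint_sq_norm_le (u := u) (a := a) (n := N) hh
    (fun x _ => (hu x).hasDerivAt)
    (by rw [hN]; exact memLp_two_deriv_of_periodic one_pos hper hu' a)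
  have parseval := sobNorm_zero_eq_sqrt_integral
    (memLp_restrict_Ioc_of_continuousOn hu.continuous.continuousOn 2)
  have deriv_le : sobNorm 0 (deriv u) ≤ 2 * π * sobNorm 1 u := by
    simpa using sobNorm_deriv_le (fun x _ => (hu x).hasDerivAt)
      ((intervalIntegrable_iff_integrableOn_Ioc_of_le zero_le_one).2 (hu'.integrable one_le_two))
      (by simpa using (hper 0).symm) 0
  rw [hN, period (‖·‖ ^ 2) hper, period (‖·‖ ^ 2) (periodic_deriv hper), ← parseval,
    ← sobNorm_zero_eq_sqrt_integral hu'] at sampling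
  simp only [tg_eq]
  calc √(h * ∑ j ∈ Finset.range N, ‖u (a + (j + 1 / 2) * h)‖ ^ 2)
      ≤ sobNorm 0 u + h / 2 * sobNorm 0 (deriv u) :=
        Real.sqrt_le_iff.2 ⟨by unfold sobNorm; positivity, sampling⟩
    _ ≤ sobNorm 0 u + h / 2 * (2 * π * sobNorm 1 u) := by gcongr
    _ = sobNorm 0 u + π * h * sobNorm 1 u := by ring

end Sampling

theorem stmt_10_general (ε : ℝ) (N : ℕ) [NeZero N] (ψ : ZMod N → ℂ) (u : ℝ → ℂ)
    (hu : Differentiable ℝ u) (hu' : MemLp (deriv u) 2 (volume.restrict (Ioc 0 1)))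
    (hper : Function.Periodic u 1) :
    ‖(1 / (N : ℂ)) * ∑ j : ZMod N, ψ j * u (tg (1 / (N : ℝ)) ε ((j.val : ℕ) : ℤ))‖ ≤
      √((1 / (N : ℝ)) * ∑ j : ZMod N, ‖ψ j‖ ^ 2)
        * (sobNorm 0 u + π * (1 / (N : ℝ)) * sobNorm 1 u) := by
  have norm_h : ‖1 / (N : ℂ)‖ = 1 / (N : ℝ) := by simp
  have sampling := sqrt_sum_sq_norm_tg_le hu hper hu' ε N
  rw [← sum_zmod_val fun j => ‖u (tg (1 / (N : ℝ)) ε j)‖ ^ 2] at sampling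
  refine (norm_const_mul_sum_mul_le _ _ _ _).trans ?_
  rw [norm_h]
  gcongr

/-- `|h Σ_j ψ_j u(t_{j+ε})| ≤ ‖ψ_h‖₀ (‖u‖₀ + π h ‖u‖₁)`. -/
theorem stmt_10
    (ε : ℝ) (N : ℕ) [NeZero N] (ψ : ZMod N → ℂ)
    (u : ℝ → ℂ) (hu : ContDiff ℝ 1 u) (hper : Function.Periodic u 1) :
    ‖(1 / (N : ℂ)) * ∑ j : ZMod N, ψ j * u (tg (1 / (N : ℝ)) ε ((j.val : ℕ) : ℤ))‖ ≤
      Real.sqrt ((1 / (N : ℝ)) * ∑ j : ZMod N, ‖ψ j‖ ^ 2)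
        * (sobNorm 0 u + Real.pi * (1 / (N : ℝ)) * sobNorm 1 u) :=
  stmt_10_general ε N ψ u (hu.differentiable one_ne_zero)
    (memLp_restrict_Ioc_of_continuousOn (hu.continuous_deriv le_rfl).continuousOn 2) hper
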